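/- Let p ∈ ℂ be such that neither p nor p + 1/2 is a nonpositive integer (i.e. p is not a nonpositive integer and p ≠ (1−2k)/2 for every positive integer k). Then ∑_{k=1}^∞ (2H_{2k} − H_k)·C(2k,k)/((p+k)²·4^k) = (Γ(1/2)·Γ(p)/Γ(p+1/2))·[ (ψ(p) − ψ(p+1/2))·(ψ(1/2) − ψ(p+1/2)) − ψ'(p+1/2) ]. -/

import Mathlib

/-!
The identity is a mixed second derivative of a Beta function expansion. For `‖a‖ < 1` and
`p ≠ 0, -1, -2, …`,
`∑ (a)ₙ / n! · 1 / (p + n) = B(p, 1 - a) = Γ(1 - a) Γ(p) / Γ(p + 1 - a)`,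
where `(a)ₙ` is the rising factorial. Applying `-∂ₚ` turns `1 / (p + n)` into `1 / (p + n)²`, and
applying `∂ₐ` at `a = 1/2` turns `(a)ₙ / n!` into
`(2 H_{2n} - H_n) C(2n, n) / 4ⁿ` (`hasDerivAt_pochCoef_half`); on the right-hand side the two
derivatives produce the digamma expression.

For `0 < Re p` the expansion (`hasSum_pochCoef_div_of_re_pos`) comes from integrating the binomial
series of `(1 - t) ^ (-a)` against `t ^ (p - 1)` over `[0, 1]`. The integrals are exchanged by
dominated convergence: the series of absolute values is dominated by the binomial series with `‖a‖`
in place of `a`, which sums to a Beta integrand. The case `p = 1` of the expansion gives the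
summability of `(‖a‖)ₙ / n! / (n + 1)`, hence locally uniform bounds in `p`; so both sides are
analytic on the connected set `gammaDomain`, and the expansion extends there (`tsum_pochCoef_div`).

The `p`-derivative is taken first (`hasSum_pochCoef_div_sq`): the extra decay `1 / (p + n)²` makes
the crude bound `|(a)ₙ / n!| ≤ 1` sufficient for the termwise `a`-derivative (`hasSum_central`).
-/

/-- The complex digamma function `ψ(z) = Γ'(z)/Γ(z)`. -/
noncomputable def cpsi (z : ℂ) : ℂ := deriv Complex.Gamma z / Complex.Gamma z

/-- The harmonic number `H_n = ∑_{k=1}^n 1/k` (as a complex number). -/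
noncomputable def Hc (n : ℕ) : ℂ := ∑ i ∈ Finset.range n, (1 : ℂ) / (i + 1)

section

open Complex Filter Topology

lemma hasSum_of_eq {f g : ℕ → ℂ} {s : ℂ} (h : HasSum f s) (hfg : ∀ n, f n = g n) : HasSum g s :=
  funext hfg ▸ h

/-! ### Coefficients of the binomial series -/

/-- The coefficient `(a)ₙ / n! = a (a + 1) ⋯ (a + n - 1) / n!` of `xⁿ` in `(1 - x) ^ (-a)`, written
as a product of quotients so that one-step recursion and termwise norm estimates are immediate. -/
noncomputable def pochCoef (a : ℂ) (n : ℕ) : ℂ := ∏ j ∈ Finset.range n, (a + j) / (j + 1)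

lemma pochCoef_succ (a : ℂ) (n : ℕ) :
    pochCoef a (n + 1) = pochCoef a n * ((a + n) / (n + 1)) :=
  Finset.prod_range_succ _ _

lemma pochCoef_eq_choose (a : ℂ) (n : ℕ) : pochCoef a n = Ring.choose (a + n - 1) n := by
  rw [← Ring.multichoose_eq]
  have h := Ring.factorial_nsmul_multichoose_eq_ascPochhammer a n
  have hf : (n.factorial : ℂ) ≠ 0 := by exact_mod_cast n.factorial_ne_zero
  rw [nsmul_eq_mul] at h
  refine mul_left_cancel₀ hf (Eq.trans ?_ h.symm)
  clear h hf
  induction n with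
  | zero => simp [pochCoef]
  | succ n ih =>
    have h1 : (n : ℂ) + 1 ≠ 0 := by exact_mod_cast n.succ_ne_zero
    rw [pochCoef_succ, ascPochhammer_succ_right, Polynomial.smeval_mul, ← ih, Nat.factorial_succ,
      Polynomial.smeval_add, Polynomial.smeval_X, Polynomial.smeval_natCast]
    simp
    field_simp

/-- For real `r ≥ 0` the coefficients are nonnegative reals; they serve as majorants of the
coefficients with complex parameter of norm at most `r`. -/
lemma pochCoef_ofReal {r : ℝ} (hr : 0 ≤ r) (n : ℕ) : pochCoef (r : ℂ) n = ‖pochCoef (r : ℂ) n‖ := by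
  induction n with
  | zero => simp [pochCoef]
  | succ n ih =>
    have h : ((r : ℂ) + n) / (n + 1) = ‖((r : ℂ) + n) / (n + 1)‖ := by
      have : ((r : ℂ) + n) / (n + 1) = (((r + n) / (n + 1) : ℝ) : ℂ) := by push_cast; ring
      rw [this, norm_real, Real.norm_of_nonneg (by positivity)]
    rw [pochCoef_succ, norm_mul, ofReal_mul, ← ih, ← h]

lemma norm_pochCoef_le {a : ℂ} {r : ℝ} (h : ‖a‖ ≤ r) (n : ℕ) :
    ‖pochCoef a n‖ ≤ ‖pochCoef (r : ℂ) n‖ := by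
  have hr := (norm_nonneg a).trans h
  simp only [pochCoef, norm_prod, norm_div]
  refine Finset.prod_le_prod (fun _ _ ↦ by positivity) fun j _ ↦ ?_
  gcongr
  calc ‖a + j‖ ≤ ‖a‖ + ‖(j : ℂ)‖ := norm_add_le _ _
    _ ≤ r + j := by simpa using h
    _ = ‖(r : ℂ) + j‖ := by
      rw [← ofReal_natCast, ← ofReal_add, norm_real, Real.norm_of_nonneg (by positivity)]

/-- Comparison with `a = 1`, where every coefficient is `1`. -/
lemma norm_pochCoef_le_one {a : ℂ} (h : ‖a‖ ≤ 1) (n : ℕ) : ‖pochCoef a n‖ ≤ 1 := by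
  refine (norm_pochCoef_le h n).trans_eq ?_
  have (j : ℕ) : ((1 : ℝ) + j : ℂ) / (j + 1) = 1 := by
    have : (j : ℂ) + 1 ≠ 0 := by exact_mod_cast j.succ_ne_zero
    rw [ofReal_one, add_comm, div_self this]
  simp only [pochCoef, this, Finset.prod_const_one, norm_one]

lemma hasSum_pochCoef_mul_pow (a : ℂ) {x : ℝ} (h0 : 0 ≤ x) (h1 : x < 1) :
    HasSum (fun n ↦ pochCoef a n * (x : ℂ) ^ n) ((1 - (x : ℂ)) ^ (-a)) := by
  have h := (one_div_one_sub_cpow_hasFPowerSeriesOnBall_zero a).hasSum (y := (x : ℂ)) (by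
    simp [← ofReal_norm, abs_of_nonneg h0, h1])
  simpa [pochCoef_eq_choose, cpow_neg, FormalMultilinearSeries.ofScalars, mul_comm] using h

lemma hasSum_norm_pochCoef_mul_pow {r x : ℝ} (hr : 0 ≤ r) (h0 : 0 ≤ x) (h1 : x < 1) :
    HasSum (fun n ↦ ‖pochCoef (r : ℂ) n‖ * x ^ n) ((1 - x) ^ (-r)) := by
  have h := hasSum_pochCoef_mul_pow (r : ℂ) h0 h1
  rw [← ofReal_one, ← ofReal_sub, ← ofReal_neg, ← ofReal_cpow (by linarith)] at h
  refine hasSum_ofReal.mp ?_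
  refine hasSum_of_eq h fun n ↦ ?_
  rw [ofReal_mul, ← pochCoef_ofReal hr, ofReal_pow]

/-! ### The Beta function expansion -/

/-- The expansion of `B(p, 1 - a)` in the half-plane where the Beta integral converges, by
termwise integration of the binomial series. -/
lemma hasSum_pochCoef_div_of_re_pos {a p : ℂ} (ha : ‖a‖ < 1) (hp : 0 < p.re) :
    HasSum (fun n : ℕ ↦ pochCoef a n / (p + n))
      (Gamma (1 - a) * Gamma p / Gamma (p + 1 - a)) := by
  set r := ‖a‖
  have hr : 0 ≤ r := norm_nonneg a
  have ha' : 0 < (1 - a).re := by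
    have := (abs_le.mp (abs_re_le_norm a)).2
    simp only [sub_re, one_re]; linarith
  have key := intervalIntegral.hasSum_integral_of_dominated_convergence
    (μ := MeasureTheory.volume) (a := 0) (b := 1)
    (F := fun n (t : ℝ) ↦ (t : ℂ) ^ (p - 1) * (pochCoef a n * (t : ℂ) ^ n))
    (f := fun t : ℝ ↦ (t : ℂ) ^ (p - 1) * (1 - (t : ℂ)) ^ ((1 - a) - 1))
    (fun n t ↦ t ^ (p.re - 1) * (‖pochCoef (r : ℂ) n‖ * t ^ n)) ?_ ?_ ?_ ?_ ?_
  · have hB : ∫ t in (0:ℝ)..1, (t : ℂ) ^ (p - 1) * (1 - (t : ℂ)) ^ ((1 - a) - 1) =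
        Gamma (1 - a) * Gamma p / Gamma (p + 1 - a) := by
      have := Gamma_mul_Gamma_eq_betaIntegral hp ha'
      have hne : Gamma (p + 1 - a) ≠ 0 := by
        rw [add_sub_assoc]
        exact Gamma_ne_zero_of_re_pos (by rw [add_re]; positivity)
      rw [eq_div_iff hne, mul_comm, mul_comm (Gamma (1 - a)), this, add_sub_assoc]
      rfl
    rw [hB] at key
    refine hasSum_of_eq key fun n ↦ ?_
    have hpn : 0 < (p + n).re := by simpa using by positivity
    have : ∫ t in (0:ℝ)..1, (t : ℂ) ^ (p - 1) * (pochCoef a n * (t : ℂ) ^ n) =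
        ∫ t in (0:ℝ)..1, pochCoef a n * (t : ℂ) ^ (p + n - 1) := by
      refine intervalIntegral.integral_congr_ae (.of_forall fun t ht ↦ ?_)
      rw [Set.uIoc_of_le zero_le_one] at ht
      have ht0 : (t : ℂ) ≠ 0 := ofReal_ne_zero.mpr ht.1.ne'
      rw [add_sub_right_comm, cpow_add _ _ ht0, cpow_natCast]
      ring
    have hne : p + n ≠ 0 := fun h ↦ by simp [h] at hpn
    rw [this, intervalIntegral.integral_const_mul, integral_cpow (.inl (by
      rw [sub_re, one_re]; linarith))]
    simp [hne, div_eq_mul_inv]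
  · intro n
    refine Measurable.aestronglyMeasurable ?_
    fun_prop
  · intro n
    refine .of_forall fun t ht ↦ ?_
    rw [Set.uIoc_of_le zero_le_one] at ht
    have ht0 := ht.1
    rw [norm_mul, norm_cpow_eq_rpow_re_of_pos ht.1, norm_mul, norm_pow, norm_real,
      Real.norm_of_nonneg ht.1.le, sub_re, one_re]
    gcongr
    exact norm_pochCoef_le le_rfl n
  · filter_upwards [MeasureTheory.volume.ae_ne (1 : ℝ)] with t ht1 ht
    rw [Set.uIoc_of_le zero_le_one] at ht
    exact ((hasSum_norm_pochCoef_mul_pow hr ht.1.le (ht.2.lt_of_ne ht1)).mul_left _).summable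
  · -- The majorants sum to `t ^ (Re p - 1) * (1 - t) ^ (-r)`, the norm of a Beta integrand.
    have hI := (betaIntegral_convergent hp (v := ((1 - r : ℝ) : ℂ)) (by
      rw [ofReal_re]; linarith)).norm
    refine hI.congr_uIoo fun t ht ↦ ?_
    rw [Set.uIoo_of_le zero_le_one] at ht
    have h1 : 0 < 1 - t := by linarith [ht.2]
    have := ((hasSum_norm_pochCoef_mul_pow hr ht.1.le ht.2).mul_left (t ^ (p.re - 1))).tsum_eq
    simp only [this]
    rw [norm_mul, norm_cpow_eq_rpow_re_of_pos ht.1, ← ofReal_one, ← ofReal_sub,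
      norm_cpow_eq_rpow_re_of_pos h1]
    simp
  · filter_upwards [MeasureTheory.volume.ae_ne (1 : ℝ)] with t ht1 ht
    rw [Set.uIoc_of_le zero_le_one] at ht
    have := (hasSum_pochCoef_mul_pow a ht.1.le (ht.2.lt_of_ne ht1)).mul_left ((t : ℂ) ^ (p - 1))
    rwa [show 1 - a - 1 = -a by ring]

/-- The set where `Γ` is holomorphic: the complement of the nonpositive integers. -/
def gammaDomain : Set ℂ := {z | ∀ n : ℕ, z ≠ -n}

lemma isOpen_gammaDomain : IsOpen gammaDomain := by
  have : gammaDomain = {z | (Gamma z)⁻¹ ≠ 0} := by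
    ext z
    simp [gammaDomain, Gamma_eq_zero_iff]
  rw [this]
  exact isOpen_ne_fun differentiable_one_div_Gamma.continuous continuous_const

lemma isPreconnected_gammaDomain : IsPreconnected gammaDomain := by
  have : gammaDomain = (Set.range fun n : ℕ ↦ (-n : ℂ))ᶜ := by
    ext z
    simp [gammaDomain, eq_comm]
  rw [this]
  exact ((Set.countable_range _).isConnected_compl_of_one_lt_rank (by simp)).isPreconnected

/-- Near a point of `gammaDomain`, `1 / (q + n) = O(1 / (n + 1))` uniformly in `q` and `n`: on a
small ball `‖q + n‖` is bounded below, while `‖(n + 1) - (q + n)‖ = ‖1 - q‖` is bounded above. -/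
lemma exists_ball_inv_bound {p : ℂ} (hp : p ∈ gammaDomain) :
    ∃ δ > 0, ∃ C > 0, Metric.ball p δ ⊆ gammaDomain ∧
      ∀ q ∈ Metric.ball p δ, ∀ n : ℕ, ‖(q + n)⁻¹‖ ≤ C * ((n : ℝ) + 1)⁻¹ := by
  obtain ⟨ε, hε, hball⟩ := Metric.isOpen_iff.mp isOpen_gammaDomain p hp
  -- `K` bounds `‖1 - q‖` on the ball, and `‖q + n‖ ≥ ε / 2` there, so that
  -- `n + 1 ≤ ‖q + n‖ + K ≤ (1 + K * (2 / ε)) * ‖q + n‖`.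
  set K := ‖1 - p‖ + ε
  have hK : 0 < K := by positivity
  refine ⟨ε / 2, by positivity, 1 + K * (2 / ε), by positivity,
    (Metric.ball_subset_ball (by linarith)).trans hball, fun q hq n ↦ ?_⟩
  rw [Metric.mem_ball, dist_eq] at hq
  have h1 : ε / 2 ≤ ‖q + n‖ := by
    have : ε ≤ ‖-(n : ℂ) - p‖ := by
      by_contra! h
      exact hball (by rwa [Metric.mem_ball, dist_eq]) n rfl
    have h2 : ‖-(n : ℂ) - p‖ ≤ ‖q + n‖ + ‖q - p‖ := by
      rw [show -(n : ℂ) - p = -(q + n) + (q - p) by ring, ← norm_neg (q + n)]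
      exact norm_add_le _ _
    linarith
  have hpos : 0 < ‖q + n‖ := by linarith [half_pos hε]
  have h3 : (n : ℝ) + 1 ≤ ‖q + n‖ + K := by
    have e : ((n : ℂ) + 1) = (q + n) + (1 - p) - (q - p) := by ring
    calc (n : ℝ) + 1 = ‖(n : ℂ) + 1‖ := by
          exact_mod_cast (norm_natCast (n + 1)).symm
      _ ≤ ‖q + n‖ + ‖1 - p‖ + ‖q - p‖ := by
          rw [e]
          exact (norm_sub_le _ _).trans (by gcongr; exact norm_add_le _ _)
      _ ≤ _ := by linarith
  have h4 : K ≤ K * (2 / ε) * ‖q + n‖ := by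
    rw [mul_assoc]
    refine le_mul_of_one_le_right hK.le ?_
    rw [div_mul_eq_mul_div, one_le_div hε]
    linarith
  rw [norm_inv, ← div_eq_mul_inv, inv_le_comm₀ hpos (by positivity), inv_div,
    div_le_iff₀ (by positivity)]
  linarith

/-- The case `p = 1` of the Beta expansion provides the majorant used for general `p`, with no need
for the asymptotics of the coefficients. -/
lemma summable_norm_pochCoef_mul {r : ℝ} (h0 : 0 ≤ r) (h1 : r < 1) :
    Summable fun n : ℕ ↦ ‖pochCoef (r : ℂ) n‖ * ((n : ℝ) + 1)⁻¹ := by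
  have := (hasSum_pochCoef_div_of_re_pos (a := r) (p := 1)
    (by rwa [norm_real, Real.norm_of_nonneg h0]) (by simp)).summable.norm
  refine this.congr fun n ↦ ?_
  rw [norm_div, add_comm, ← Nat.cast_succ, norm_natCast, Nat.cast_succ, div_eq_mul_inv]

lemma differentiableOn_Gamma : DifferentiableOn ℂ Gamma gammaDomain :=
  fun z hz ↦ (differentiableAt_Gamma z hz).differentiableWithinAt

lemma mem_gammaDomain_of_re_pos {z : ℂ} (hz : 0 < z.re) : z ∈ gammaDomain := by
  rintro n rfl
  rw [neg_re, natCast_re] at hz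
  linarith [(n.cast_nonneg : (0 : ℝ) ≤ n)]

lemma differentiableOn_pochCoef_div (a : ℂ) (n : ℕ) :
    DifferentiableOn ℂ (fun q : ℂ ↦ pochCoef a n / (q + n)) gammaDomain := by
  intro q hq
  have : q + n ≠ 0 := fun h ↦ hq n (eq_neg_of_add_eq_zero_left h)
  exact DifferentiableAt.differentiableWithinAt (by fun_prop (disch := exact this))

lemma norm_pochCoef_div_le {a q : ℂ} {C : ℝ} {n : ℕ} (h : ‖(q + n)⁻¹‖ ≤ C * ((n : ℝ) + 1)⁻¹) :
    ‖pochCoef a n / (q + n)‖ ≤ C * (‖pochCoef (‖a‖ : ℂ) n‖ * ((n : ℝ) + 1)⁻¹) := by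
  rw [div_eq_mul_inv, norm_mul]
  calc _ ≤ ‖pochCoef (‖a‖ : ℂ) n‖ * (C * ((n : ℝ) + 1)⁻¹) := by
        gcongr
        exact norm_pochCoef_le le_rfl n
    _ = _ := by ring

/-- The Beta expansion on all of `gammaDomain`, by the identity theorem. At the poles of
`Γ(p + 1 - a)` the right-hand side is `x / 0 = 0`, which is also the value of the analytic function
`Γ(1 - a) Γ(p) (Γ(p + 1 - a))⁻¹`. -/
lemma tsum_pochCoef_div {a p : ℂ} (ha : ‖a‖ < 1) (hp : p ∈ gammaDomain) :
    ∑' n : ℕ, pochCoef a n / (p + n) = Gamma (1 - a) * Gamma p / Gamma (p + 1 - a) := by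
  have hs := summable_norm_pochCoef_mul (norm_nonneg a) ha
  refine AnalyticOnNhd.eqOn_of_preconnected_of_eventuallyEq (𝕜 := ℂ) (U := gammaDomain) (z₀ := 1)
    (f := fun p : ℂ ↦ ∑' n : ℕ, pochCoef a n / (p + n))
    (g := fun p : ℂ ↦ Gamma (1 - a) * Gamma p / Gamma (p + 1 - a))
    (DifferentiableOn.analyticOnNhd ?_ isOpen_gammaDomain)
    (DifferentiableOn.analyticOnNhd ?_ isOpen_gammaDomain)
    isPreconnected_gammaDomain (mem_gammaDomain_of_re_pos (by simp)) ?_ hp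
  · intro q hq
    obtain ⟨δ, hδ, C, hC, hsub, hb⟩ := exists_ball_inv_bound hq
    refine DifferentiableAt.differentiableWithinAt ?_
    refine (differentiableOn_tsum_of_summable_norm (hs.mul_left C)
      (fun n ↦ (differentiableOn_pochCoef_div a n).mono hsub) Metric.isOpen_ball
      fun n w hw ↦ norm_pochCoef_div_le (hb w hw n)).differentiableAt
      (Metric.isOpen_ball.mem_nhds (Metric.mem_ball_self hδ))
  · simp only [div_eq_mul_inv]
    refine (differentiableOn_Gamma.const_mul _).mul ?_
    exact (differentiable_one_div_Gamma.comp (by fun_prop :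
      Differentiable ℂ fun q : ℂ ↦ q + 1 - a)).differentiableOn
  · filter_upwards [(isOpen_lt continuous_const continuous_re).mem_nhds
      (show (0 : ℝ) < (1 : ℂ).re by simp)] with q hq
    exact (hasSum_pochCoef_div_of_re_pos ha hq).tsum_eq

lemma hasDerivAt_Gamma_cpsi {z : ℂ} (hz : z ∈ gammaDomain) : HasDerivAt Gamma (Gamma z * cpsi z) z := by
  rw [cpsi, mul_div_cancel₀ _ (Gamma_ne_zero hz)]
  exact (differentiableAt_Gamma z hz).hasDerivAt

/-! ### The two derivatives -/

/-- The `p`-derivative of the Beta expansion. -/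
lemma hasSum_pochCoef_div_sq {a p : ℂ} (ha : ‖a‖ < 1) (hp : p ∈ gammaDomain)
    (hpa : p + 1 - a ∈ gammaDomain) :
    HasSum (fun n : ℕ ↦ pochCoef a n * (-((p + n) ^ 2)⁻¹))
      (Gamma (1 - a) * Gamma p / Gamma (p + 1 - a) * (cpsi p - cpsi (p + 1 - a))) := by
  obtain ⟨δ, hδ, C, hC, hsub, hb⟩ := exists_ball_inv_bound hp
  have h := hasSum_deriv_of_summable_norm
    ((summable_norm_pochCoef_mul (norm_nonneg a) ha).mul_left C)
    (fun n ↦ (differentiableOn_pochCoef_div a n).mono hsub) Metric.isOpen_ball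
    (fun n w hw ↦ norm_pochCoef_div_le (hb w hw n)) (Metric.mem_ball_self hδ)
  have hne := Gamma_ne_zero hpa
  have h1 : deriv (fun w : ℂ ↦ ∑' n : ℕ, pochCoef a n / (w + n)) p =
      Gamma (1 - a) * Gamma p / Gamma (p + 1 - a) * (cpsi p - cpsi (p + 1 - a)) := by
    have hev : (fun w : ℂ ↦ ∑' n : ℕ, pochCoef a n / (w + n)) =ᶠ[𝓝 p]
        fun w ↦ Gamma (1 - a) * Gamma w / Gamma (w + 1 - a) := by
      filter_upwards [isOpen_gammaDomain.mem_nhds hp] with w hw using tsum_pochCoef_div ha hw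
    rw [hev.deriv_eq]
    have hd := (hasDerivAt_Gamma_cpsi hpa).comp p (((hasDerivAt_id p).add_const 1).sub_const a)
    refine (((hasDerivAt_Gamma_cpsi hp).const_mul (Gamma (1 - a))).div hd hne).deriv.trans ?_
    simp only [Function.comp_apply, id]
    field_simp
  rw [h1] at h
  refine hasSum_of_eq h fun n ↦ ?_
  have hn : p + n ≠ 0 := fun h ↦ hp n (eq_neg_of_add_eq_zero_left h)
  refine ((((hasDerivAt_id p).add_const (n : ℂ)).inv hn).const_mul (pochCoef a n)).deriv.trans ?_
  simp [div_eq_mul_inv]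

/-- Value and derivative at `a = 1/2` of the coefficients. The derivative is the value times the
logarithmic derivative `∑_{j<n} 1 / (j + 1/2) = 2 H_{2n} - H_n`. -/
lemma hasDerivAt_pochCoef_half (n : ℕ) :
    pochCoef (1 / 2) n = (Nat.choose (2 * n) n : ℂ) / 4 ^ n ∧
    HasDerivAt (fun a ↦ pochCoef a n)
      ((2 * Hc (2 * n) - Hc n) * (Nat.choose (2 * n) n : ℂ) / 4 ^ n) (1 / 2) := by
  induction n with
  | zero => simpa [pochCoef, Hc] using hasDerivAt_const (1 / 2 : ℂ) (1 : ℂ)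
  | succ n ih =>
    obtain ⟨ih1, ih2⟩ := ih
    have h1 : (n : ℂ) + 1 ≠ 0 := by exact_mod_cast n.succ_ne_zero
    have h2 : 2 * (n : ℂ) + 1 ≠ 0 := by exact_mod_cast (2 * n).succ_ne_zero
    have hb : (Nat.choose (2 * (n + 1)) (n + 1) : ℂ) =
        2 * (2 * n + 1) * Nat.choose (2 * n) n / (n + 1) := by
      rw [eq_div_iff h1, mul_comm]
      exact_mod_cast Nat.succ_mul_centralBinom_succ n
    have hH : Hc (n + 1) = Hc n + 1 / (n + 1) := Finset.sum_range_succ _ _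
    have hH2 : Hc (2 * (n + 1)) = Hc (2 * n) + 1 / (2 * n + 1) + 1 / (2 * n + 2) := by
      rw [mul_add, mul_one, Hc, Finset.sum_range_succ, Finset.sum_range_succ, ← Hc]
      push_cast
      ring
    have h3 : 2 * (n : ℂ) + 2 ≠ 0 := by
      rw [show 2 * (n : ℂ) + 2 = 2 * (n + 1) by ring]; exact mul_ne_zero two_ne_zero h1
    simp only [pochCoef_succ]
    constructor
    · rw [ih1, hb, pow_succ]
      field_simp
      ring
    · have hd := ih2.mul (((hasDerivAt_id (1 / 2 : ℂ)).add_const (n : ℂ)).div_const ((n : ℂ) + 1))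
      convert! hd using 1
      simp only [ih1, id, hb, hH, hH2, pow_succ]
      rw [show 2 * (n : ℂ) + 2 = 2 * (n + 1) by ring]
      field_simp
      ring

/-- The `a`-derivative at `1/2` of `hasSum_pochCoef_div_sq`. The sum starts at `n = 0`, where the
term vanishes because `H_0 = 0`. -/
lemma hasSum_central (p : ℂ) (hp : p ∈ gammaDomain) (hp' : p + 1 / 2 ∈ gammaDomain) :
    HasSum (fun n : ℕ ↦ (2 * Hc (2 * n) - Hc n) * (Nat.choose (2 * n) n : ℂ) /
        ((p + n) ^ 2 * 4 ^ n))
      (Gamma (1 / 2) * Gamma p / Gamma (p + 1 / 2) *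
        ((cpsi p - cpsi (p + 1 / 2)) * (cpsi (1 / 2) - cpsi (p + 1 / 2)) -
          deriv cpsi (p + 1 / 2))) := by
  obtain ⟨δ, hδ, C, hC, hsub, hb⟩ := exists_ball_inv_bound hp
  have hbp := hb p (Metric.mem_ball_self hδ)
  have hsum : Summable fun n : ℕ ↦ C ^ 2 * (((n : ℝ) + 1) ^ 2)⁻¹ := by
    have := (summable_nat_add_iff 1).mpr (Real.summable_nat_pow_inv.mpr one_lt_two)
    exact (by simpa using this : Summable fun n : ℕ ↦ (((n : ℝ) + 1) ^ 2)⁻¹).mul_left _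
  have hpoch (n : ℕ) : Differentiable ℂ fun a ↦ pochCoef a n := by
    unfold pochCoef
    fun_prop
  have hhalf : (1 / 2 : ℂ) ∈ Metric.ball (0 : ℂ) 1 := by norm_num
  have h := hasSum_deriv_of_summable_norm (U := Metric.ball (0 : ℂ) 1)
    (F := fun (n : ℕ) a ↦ pochCoef a n * (-((p + n) ^ 2)⁻¹)) hsum
    (fun n ↦ ((hpoch n).mul_const _).differentiableOn) Metric.isOpen_ball ?_ hhalf
  swap
  · intro n a ha
    rw [mem_ball_zero_iff] at ha
    rw [norm_mul, norm_neg, ← inv_pow, norm_pow, ← inv_pow, ← mul_pow]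
    refine (mul_le_of_le_one_left (by positivity) (norm_pochCoef_le_one ha.le n)).trans ?_
    gcongr
    exact hbp n
  have e1 : p + 1 - 1 / 2 = p + 1 / 2 := by ring
  have e2 : (1 : ℂ) - 1 / 2 = 1 / 2 := by norm_num
  have hmem : ∀ᶠ a in 𝓝 (1 / 2 : ℂ), p + 1 - a ∈ gammaDomain :=
    (by fun_prop : Continuous fun a : ℂ ↦ p + 1 - a).continuousAt.eventually
      (isOpen_gammaDomain.mem_nhds (by simpa only [e1] using hp'))
  have h1 : deriv (fun a : ℂ ↦ ∑' n : ℕ, pochCoef a n * (-((p + n) ^ 2)⁻¹)) (1 / 2) =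
      -(Gamma (1 / 2) * Gamma p / Gamma (p + 1 / 2) *
        ((cpsi p - cpsi (p + 1 / 2)) * (cpsi (1 / 2) - cpsi (p + 1 / 2)) -
          deriv cpsi (p + 1 / 2))) := by
    have hev : (fun a : ℂ ↦ ∑' n : ℕ, pochCoef a n * (-((p + n) ^ 2)⁻¹)) =ᶠ[𝓝 (1 / 2)]
        fun a ↦ Gamma (1 - a) * Gamma p / Gamma (p + 1 - a) * (cpsi p - cpsi (p + 1 - a)) := by
      filter_upwards [hmem, Metric.isOpen_ball.mem_nhds hhalf] with a ha ha1
      exact (hasSum_pochCoef_div_sq (mem_ball_zero_iff.mp ha1) hp ha).tsum_eq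
    rw [hev.deriv_eq]
    have hψ : HasDerivAt cpsi (deriv cpsi (p + 1 / 2)) (p + 1 / 2) := by
      refine DifferentiableAt.hasDerivAt (f := deriv Gamma / Gamma) ?_
      exact (((differentiableOn_Gamma.deriv isOpen_gammaDomain).differentiableAt
        (isOpen_gammaDomain.mem_nhds hp')).div (differentiableAt_Gamma _ hp') (Gamma_ne_zero hp'))
    have hs1 : HasDerivAt (fun a : ℂ ↦ 1 - a) (-1) (1 / 2) := (hasDerivAt_id _).const_sub 1
    have hs2 : HasDerivAt (fun a : ℂ ↦ p + 1 - a) (-1) (1 / 2) := (hasDerivAt_id _).const_sub _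
    have hG1 := HasDerivAt.comp_of_eq (1 / 2 : ℂ)
      (hasDerivAt_Gamma_cpsi (mem_gammaDomain_of_re_pos (by norm_num : 0 < (1 / 2 : ℂ).re))) hs1 e2.symm
    have hG2 := HasDerivAt.comp_of_eq (1 / 2 : ℂ) (hasDerivAt_Gamma_cpsi hp') hs2 e1.symm
    have hψ2 := HasDerivAt.comp_of_eq (1 / 2 : ℂ) hψ hs2 e1.symm
    have hne := Gamma_ne_zero hp'
    refine (((hG1.mul_const (Gamma p)).div hG2 (by simpa only [Function.comp_apply, e1])).mul
      (hψ2.const_sub (cpsi p))).deriv.trans ?_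
    simp only [Pi.div_apply, Function.comp_apply, e1, e2]
    field_simp
    ring
  rw [h1] at h
  -- `h` sums the negatives of the wanted terms.
  rw [← neg_neg (Gamma (1 / 2) * _ / _ * _)]
  refine hasSum_of_eq h.neg fun n ↦ ?_
  rw [((hasDerivAt_pochCoef_half n).2.mul_const _).deriv, mul_neg, neg_neg, ← div_eq_mul_inv,
    div_div, mul_comm (4 ^ n)]

end

/-- For `p ∈ ℂ` with neither `p` nor `p + 1/2` a nonpositive integer,
`∑_{k=1}^∞ (2H_{2k} − H_k)·C(2k,k)/((p+k)²·4^k)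
  = (Γ(1/2)·Γ(p)/Γ(p+1/2))·[(ψ(p) − ψ(p+1/2))·(ψ(1/2) − ψ(p+1/2)) − ψ'(p+1/2)]`. -/
theorem sum_central_binom_sq_eq (p : ℂ) (hp : ∀ n : ℕ, p ≠ -n)
    (hp' : ∀ n : ℕ, p + 1 / 2 ≠ -n) :
    (∑' k : ℕ,
        (2 * Hc (2 * (k + 1)) - Hc (k + 1)) * (Nat.choose (2 * (k + 1)) (k + 1) : ℂ) /
          ((p + (k + 1)) ^ 2 * 4 ^ (k + 1))) =
      Complex.Gamma (1 / 2) * Complex.Gamma p / Complex.Gamma (p + 1 / 2) *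
        ((cpsi p - cpsi (p + 1 / 2)) * (cpsi (1 / 2) - cpsi (p + 1 / 2)) -
          deriv cpsi (p + 1 / 2)) := by
  -- The term `n = 0` of `hasSum_central` vanishes and is split off.
  have h := hasSum_central p hp hp'
  rw [← hasSum_nat_add_iff' 1] at h
  simpa [Hc] using h.tsum_eq
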